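/- Let W be a set of expressions, T_α and T_β sets with ternary relations E_α and E_β, and h : T_α → T_β a map such that E_α A B C implies E_β (h A) (h B) (h C). For a language 𝓛 ⊆ W × T_α write h⋆𝓛 = {(w, h A) : (w,A) ∈ 𝓛} ⊆ W × T_β. Then: (i) the logical closure of h⋆(𝓛̄) equals the logical closure of h⋆𝓛, where 𝓛̄ is the logical closure of 𝓛; and consequently (ii) for all languages 𝓚, 𝓛 ⊆ W × T_α, the logical closure of h⋆(𝓚 ⊔ 𝓛) equals the logical join of the logical closures of h⋆𝓚 and h⋆𝓛, where ⊔ denotes logical join (logical closure of the union). -/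

import Mathlib

/-!
The preimage of a logically closed language under `(w, A) ↦ (w, h A)` is again logically closed,
because `h` is equivariant. Hence a closed language containing `h⋆L` also contains `h⋆` of the
logical closure of `L` (`mapTermLang_lclosure_subset`), which gives (i). Part (ii) follows from (i),
since `h⋆` commutes with unions and closing two languages does not change their logical join.
-/

/-- A language `𝓛 ⊆ W × T` is logically closed w.r.t. `E` (Definition 3.4). -/
def LClosedLang {W T : Type*} (E : T → T → T → Prop) (L : Set (W × T)) : Prop :=
  ∀ (w : W) (A B C : T), (w, B) ∈ L → (w, C) ∈ L → E A B C → (w, A) ∈ L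

/-- Logical closure of a language. -/
def lclosureLang {W T : Type*} (E : T → T → T → Prop) (L : Set (W × T)) :
    Set (W × T) :=
  ⋂₀ {S : Set (W × T) | L ⊆ S ∧ LClosedLang E S}

/-- Pushforward of a language along a map on terms (a functional semantic rule,
Definition 3.11): `h⋆𝓛 = {(w, h A) : (w, A) ∈ 𝓛}`. -/
def mapTermLang {W Tα Tβ : Type*} (h : Tα → Tβ) (L : Set (W × Tα)) :
    Set (W × Tβ) :=
  (fun p : W × Tα => (p.1, h p.2)) '' L

theorem subset_lclosureLang {W T : Type*} (E : T → T → T → Prop) (L : Set (W × T)) :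
    L ⊆ lclosureLang E L :=
  Set.subset_sInter fun _ hS => hS.1

theorem lclosureLang_subset {W T : Type*} {E : T → T → T → Prop} {L S : Set (W × T)}
    (hLS : L ⊆ S) (hS : LClosedLang E S) : lclosureLang E L ⊆ S :=
  Set.sInter_subset_of_mem ⟨hLS, hS⟩

theorem lclosedLang_lclosureLang {W T : Type*} (E : T → T → T → Prop) (L : Set (W × T)) :
    LClosedLang E (lclosureLang E L) :=
  fun w A B C hB hC hE S hS => hS.2 w A B C (hB S hS) (hC S hS) hE

theorem lclosureLang_mono {W T : Type*} (E : T → T → T → Prop) {K L : Set (W × T)}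
    (hKL : K ⊆ L) : lclosureLang E K ⊆ lclosureLang E L :=
  lclosureLang_subset (hKL.trans (subset_lclosureLang E L)) (lclosedLang_lclosureLang E L)

theorem mapTermLang_lclosure_subset {W Tα Tβ : Type*}
    {Eα : Tα → Tα → Tα → Prop} {Eβ : Tβ → Tβ → Tβ → Prop}
    {h : Tα → Tβ} (hh : ∀ A B C : Tα, Eα A B C → Eβ (h A) (h B) (h C)) (L : Set (W × Tα)) :
    mapTermLang h (lclosureLang Eα L) ⊆ lclosureLang Eβ (mapTermLang h L) :=
  Set.image_subset_iff.2 <| lclosureLang_subset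
    (Set.image_subset_iff.1 (subset_lclosureLang Eβ (mapTermLang h L)))
    fun w A B C hB hC hE =>
      lclosedLang_lclosureLang Eβ (mapTermLang h L) w (h A) (h B) (h C) hB hC (hh A B C hE)

theorem lclosureLang_union_lclosureLang {W T : Type*} (E : T → T → T → Prop)
    (K L : Set (W × T)) :
    lclosureLang E (lclosureLang E K ∪ lclosureLang E L) = lclosureLang E (K ∪ L) :=
  Set.Subset.antisymm
    (lclosureLang_subset
      (Set.union_subset (lclosureLang_mono E Set.subset_union_left)
        (lclosureLang_mono E Set.subset_union_right))
      (lclosedLang_lclosureLang E (K ∪ L)))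
    (lclosureLang_mono E
      (Set.union_subset_union (subset_lclosureLang E K) (subset_lclosureLang E L)))

/-- for `h` equivariant w.r.t. `E_α`, `E_β`:
(i) the logical closure of `h⋆(𝓛̄)` equals the logical closure of `h⋆𝓛`;
(ii) the logical closure of `h⋆(𝓚 ⊔ 𝓛)` equals the logical join of the logical
closures of `h⋆𝓚` and `h⋆𝓛`. -/
theorem mapTermLang_lclosure {W Tα Tβ : Type*}
    (Eα : Tα → Tα → Tα → Prop) (Eβ : Tβ → Tβ → Tβ → Prop)
    (h : Tα → Tβ) (hh : ∀ A B C : Tα, Eα A B C → Eβ (h A) (h B) (h C)) :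
    (∀ L : Set (W × Tα),
      lclosureLang Eβ (mapTermLang h (lclosureLang Eα L)) =
        lclosureLang Eβ (mapTermLang h L)) ∧
    (∀ K L : Set (W × Tα),
      lclosureLang Eβ (mapTermLang h (lclosureLang Eα (K ∪ L))) =
        lclosureLang Eβ
          (lclosureLang Eβ (mapTermLang h K) ∪ lclosureLang Eβ (mapTermLang h L))) := by
  have closure_map (L : Set (W × Tα)) :
      lclosureLang Eβ (mapTermLang h (lclosureLang Eα L)) =
        lclosureLang Eβ (mapTermLang h L) :=
    Set.Subset.antisymm
      (lclosureLang_subset (mapTermLang_lclosure_subset hh L) (lclosedLang_lclosureLang Eβ _))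
      (lclosureLang_mono Eβ (Set.image_mono (subset_lclosureLang Eα L)))
  refine ⟨closure_map, fun K L => ?_⟩
  rw [closure_map, lclosureLang_union_lclosureLang, mapTermLang, Set.image_union]
  rfl
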